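/- For all natural numbers p, q with p < q < 2p − ⌊|p−2|/2⌋ (an inequality of integers), and for every even natural number l with 2 ≤ l ≤ F(p,q) − 2, there exist natural numbers p' ≤ p−1 and q' ≤ q−1 such that f(p',q') ⊕ f(p−1−p', q−1−q') = l. -/

import Mathlib

/-- `mex S` is the least natural number not belonging to `S`. -/
noncomputable def mex (S : Set ℕ) : ℕ := sInf {n : ℕ | n ∉ S}

/-- `h 0 = 0` and `h n = 1` for all `n ≥ 1`. -/
def h : ℕ → ℕ
  | 0 => 0
  | _ + 1 => 1

/-- The nimber of the Circular sprout game `CS₄(𝒫₄ : p,1,q,1)`, defined by strong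
recursion: `f p q` is the mex of the set consisting of `h p ^^^ h q` together with all
values `f p' q' ^^^ f (p-1-p') (q-1-q')` for `0 ≤ p' ≤ p-1` and `0 ≤ q' ≤ q-1`. -/
noncomputable def f (p q : ℕ) : ℕ :=
  mex ({h p ^^^ h q} ∪
    ⋃ (p' : ℕ) (_ : p' < p) (q' : ℕ) (_ : q' < q),
      {f p' q' ^^^ f (p - 1 - p') (q - 1 - q')})
termination_by p
decreasing_by
  · omega
  · omega

/-- `idx p q` is the unique element of `{1,2,3,4,5}` congruent to `p + q` modulo `5`. -/
def idx (p q : ℕ) : ℕ := if (p + q) % 5 = 0 then 5 else (p + q) % 5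

/-- `F p q = (4/5)·(p + q − idx p q) + 2·⌊idx p q / 4⌋`. -/
def F (p q : ℕ) : ℕ := 4 * ((p + q - idx p q) / 5) + 2 * (idx p q / 4)

/-!
The function `f` has a closed form: it is `1` on the diagonal and `2 * M p q` off it, where `M p q`,
written `halfNimber p q`, is the minimum of `p`, `q` and `⌊2 (p + q - 1) / 5⌋`, except that
`M 1 2 = M 2 1 = 1`. Since `f p q` is a mex, every positive number below it is the Nim-sum of a
split, and `F p q ≤ f p q` in the given range.

The closed form satisfies the recursion of `f` for the following reasons. Off the diagonal, `M` is
strictly superadditive along splits unless the two summands agree, so their Nim-sum, which is at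
most their sum, never equals `M p q`; parity excludes the other splits. Conversely, `M` changes by
at most one along columns and diagonals. Splitting off a diagonal position therefore yields all
smaller odd numbers, and splitting off `(a, 0)`, of value zero, yields the even ones up to a last
value, which comes from `(0, 1)` or from one of the exceptional positions `(1, 2)` and `(2, 1)`.
-/

section Mex

variable {S : Set ℕ} {n : ℕ}

lemma mex_eq_of_notMem_of_forall_lt_mem (hn : n ∉ S) (hlt : ∀ t < n, t ∈ S) : mex S = n :=
  le_antisymm (Nat.sInf_le hn)
    (le_csInf ⟨n, hn⟩ fun m hm => not_lt.mp fun hmn => hm (hlt m hmn))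

lemma mem_of_lt_mex (hn : n < mex S) : n ∈ S :=
  not_not.mp (Nat.notMem_of_lt_sInf hn)

end Mex

lemma two_mul_xor_two_mul (a b : ℕ) : (2 * a) ^^^ (2 * b) = 2 * (a ^^^ b) :=
  Nat.xor_bit false a false b

lemma two_mul_xor_one (a : ℕ) : (2 * a) ^^^ 1 = 2 * a + 1 :=
  Nat.xor_one_of_even (even_two_mul a)

lemma one_xor_two_mul (a : ℕ) : 1 ^^^ (2 * a) = 2 * a + 1 := by
  rw [Nat.xor_comm, two_mul_xor_one]

lemma xor_le_add (a b : ℕ) : a ^^^ b ≤ a + b := by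
  induction a using Nat.strong_induction_on generalizing b with
  | _ a ih =>
    rcases Nat.eq_zero_or_pos a with rfl | ha
    · simp
    · have hhalf := ih (a / 2) (by omega) (b / 2)
      have hdiv : (a ^^^ b) / 2 = a / 2 ^^^ b / 2 := Nat.xor_div_two
      have hmod : (a ^^^ b) % 2 = (a + b) % 2 := Nat.xor_mod_two_eq
      omega

lemma exists_le_eq_of_forall_succ_le_add_one {u : ℕ → ℕ} (hu : ∀ i, u (i + 1) ≤ u i + 1) {n t : ℕ}
    (h0 : u 0 ≤ t) (hn : t ≤ u n) : ∃ i ≤ n, u i = t := by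
  induction n with
  | zero => exact ⟨0, le_rfl, h0.antisymm hn⟩
  | succ n ih =>
    rcases hn.eq_or_lt with rfl | hlt
    · exact ⟨n + 1, le_rfl, rfl⟩
    · obtain ⟨i, hi, rfl⟩ := ih (Nat.le_of_lt_succ (hlt.trans_le (hu n)))
      exact ⟨i, Nat.le_succ_of_le hi, rfl⟩

/-- The Nim-sums of `g` over the splitting moves from `(p, q)`, which use up one unit of each
coordinate and distribute the rest over two positions `(a, b)` and `(c, d)`. -/
def splitOptions (g : ℕ → ℕ → ℕ) (p q : ℕ) : Set ℕ :=
  {x | ∃ a b c d, a + c + 1 = p ∧ b + d + 1 = q ∧ g a b ^^^ g c d = x}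

section SplitOptions

variable {g g' : ℕ → ℕ → ℕ} {p q x : ℕ}

lemma mem_splitOptions_iff : x ∈ splitOptions g p q ↔
    ∃ p' < p, ∃ q' < q, g p' q' ^^^ g (p - 1 - p') (q - 1 - q') = x := by
  constructor
  · rintro ⟨a, b, c, d, rfl, rfl, hx⟩
    refine ⟨a, by omega, b, by omega, ?_⟩
    simpa only [Nat.add_sub_cancel, Nat.add_sub_cancel_left] using hx
  · rintro ⟨a, ha, b, hb, hx⟩
    exact ⟨a, b, p - 1 - a, q - 1 - b, by omega, by omega, hx⟩

lemma splitOptions_subset_of_forall_lt (hg : ∀ a < p, ∀ b, g a b = g' a b) :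
    splitOptions g p q ⊆ splitOptions g' p q := by
  rintro _ ⟨a, b, c, d, hp, hq, rfl⟩
  exact ⟨a, b, c, d, hp, hq, by rw [hg a (by omega), hg c (by omega)]⟩

lemma splitOptions_congr (hg : ∀ a < p, ∀ b, g a b = g' a b) :
    splitOptions g p q = splitOptions g' p q :=
  (splitOptions_subset_of_forall_lt hg).antisymm
    (splitOptions_subset_of_forall_lt fun a ha b => (hg a ha b).symm)

lemma mem_splitOptions_swap (hg : ∀ a b, g a b = g b a) (hx : x ∈ splitOptions g p q) :
    x ∈ splitOptions g q p := by
  obtain ⟨a, b, c, d, hp, hq, rfl⟩ := hx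
  exact ⟨b, a, d, c, hq, hp, by rw [hg a, hg c]⟩

end SplitOptions

lemma f_eq_mex (p q : ℕ) : f p q = mex (insert (h p ^^^ h q) (splitOptions f p q)) := by
  rw [f]
  congr 1
  ext x
  simp only [Set.singleton_union, Set.mem_insert_iff, Set.mem_iUnion, Set.mem_singleton_iff,
    exists_prop, mem_splitOptions_iff, eq_comm]

/-- Half of the nimber of an off-diagonal position `(p, q)`; its values on the diagonal have no
meaning for the game. Truncated subtraction only affects `(0, 0)`. -/
def halfNimber (p q : ℕ) : ℕ :=
  if (p = 1 ∧ q = 2) ∨ (p = 2 ∧ q = 1) then 1 else min (min p q) (2 * (p + q - 1) / 5)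

section HalfNimber

variable {a b c d j m p q : ℕ}

lemma halfNimber_comm (p q : ℕ) : halfNimber p q = halfNimber q p := by
  unfold halfNimber; split_ifs <;> omega

lemma halfNimber_zero_left (q : ℕ) : halfNimber 0 q = 0 := by simp [halfNimber]

lemma halfNimber_zero_right (p : ℕ) : halfNimber p 0 = 0 := by simp [halfNimber]

lemma halfNimber_one_two : halfNimber 1 2 = 1 := by simp [halfNimber]

lemma halfNimber_le_left (p q : ℕ) : halfNimber p q ≤ p := by
  unfold halfNimber; split_ifs <;> omega

lemma halfNimber_le_right (p q : ℕ) : halfNimber p q ≤ q :=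
  halfNimber_comm p q ▸ halfNimber_le_left q p

lemma five_mul_halfNimber_add_one_le (hpq : p ≠ q) : 5 * halfNimber p q + 1 ≤ 2 * (p + q) := by
  unfold halfNimber; split_ifs <;> omega

lemma five_mul_halfNimber_add_two_le (hpq : p ≠ q) (hne : halfNimber p q ≠ 1) :
    5 * halfNimber p q + 2 ≤ 2 * (p + q) := by
  unfold halfNimber at *; split_ifs at * <;> omega

lemma min_le_halfNimber (p q : ℕ) : min (min p q) (2 * (p + q - 1) / 5) ≤ halfNimber p q := by
  unfold halfNimber; split_ifs <;> omega

lemma le_halfNimber (hp : m ≤ p) (hq : m ≤ q) (hm : 5 * m + 2 ≤ 2 * (p + q)) :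
    m ≤ halfNimber p q :=
  le_trans (by omega) (min_le_halfNimber p q)

lemma halfNimber_pos (hp : p ≠ 0) (hq : q ≠ 0) (hpq : p ≠ q) : 0 < halfNimber p q := by
  unfold halfNimber; split_ifs <;> omega

lemma halfNimber_eq_two_mul (hs : p + q = 5 * j + 1) (hp : 2 * j ≤ p) (hq : 2 * j ≤ q) :
    halfNimber p q = 2 * j := by
  unfold halfNimber; split_ifs <;> omega

lemma halfNimber_succ_left_le (p q : ℕ) : halfNimber (p + 1) q ≤ halfNimber p q + 1 := by
  unfold halfNimber; split_ifs <;> omega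

lemma halfNimber_succ_succ_le (p q : ℕ) : halfNimber (p + 1) (q + 1) ≤ halfNimber p q + 1 := by
  unfold halfNimber; split_ifs <;> omega

lemma halfNimber_add_lt (hab : a ≠ b) (hcd : c ≠ d) (hne : halfNimber a b ≠ halfNimber c d) :
    halfNimber a b + halfNimber c d < halfNimber (a + c + 1) (b + d + 1) := by
  have := halfNimber_le_left a b
  have := halfNimber_le_right a b
  have := halfNimber_le_left c d
  have := halfNimber_le_right c d
  have hab1 := five_mul_halfNimber_add_one_le hab
  have hcd1 := five_mul_halfNimber_add_one_le hcd
  have hsum : 5 * (halfNimber a b + halfNimber c d) + 3 ≤ 2 * (a + b) + 2 * (c + d) := by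
    by_cases hone : halfNimber a b = 1
    · have := five_mul_halfNimber_add_two_le hcd (hone ▸ hne.symm)
      omega
    · have := five_mul_halfNimber_add_two_le hab hone
      omega
  exact le_halfNimber (by omega) (by omega) (by omega)

lemma halfNimber_xor_ne (hab : a ≠ b) (hcd : c ≠ d) (hne : a + c ≠ b + d) :
    halfNimber a b ^^^ halfNimber c d ≠ halfNimber (a + c + 1) (b + d + 1) := by
  by_cases heq : halfNimber a b = halfNimber c d
  · rw [heq, Nat.xor_self]
    exact (halfNimber_pos (by omega) (by omega) (by omega)).ne
  · exact ((xor_le_add _ _).trans_lt (halfNimber_add_lt hab hcd heq)).ne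

end HalfNimber

/-- The closed form of the nimber `f`, see `f_eq_closedForm`. -/
def closedForm (p q : ℕ) : ℕ := if p = q then 1 else 2 * halfNimber p q

section ClosedForm

variable {a b c d j p q t : ℕ}

lemma closedForm_self (p : ℕ) : closedForm p p = 1 := if_pos rfl

lemma closedForm_of_ne (hpq : p ≠ q) : closedForm p q = 2 * halfNimber p q := if_neg hpq

lemma closedForm_comm (p q : ℕ) : closedForm p q = closedForm q p := by
  simp only [closedForm, halfNimber_comm p q, eq_comm]

lemma closedForm_ne_h_xor_h (p q : ℕ) : closedForm p q ≠ h p ^^^ h q := by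
  rcases eq_or_ne p q with rfl | hpq
  · simp [closedForm_self]
  · rw [closedForm_of_ne hpq]
    rcases p with _ | p <;> rcases q with _ | q
    · exact absurd rfl hpq
    · simp [halfNimber_zero_left, h]
    · simp [halfNimber_zero_right, h]
    · simpa [h] using (halfNimber_pos p.succ_ne_zero q.succ_ne_zero hpq).ne'

lemma closedForm_notMem_splitOptions (p q : ℕ) :
    closedForm p q ∉ splitOptions closedForm p q := by
  rintro ⟨a, b, c, d, rfl, rfl, hx⟩
  rcases eq_or_ne a b with rfl | hab <;> rcases eq_or_ne c d with rfl | hcd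
  · simp [closedForm_self] at hx
  · rw [closedForm_self, closedForm_of_ne hcd, closedForm_of_ne (by omega), one_xor_two_mul] at hx
    omega
  · rw [closedForm_self, closedForm_of_ne hab, closedForm_of_ne (by omega), two_mul_xor_one] at hx
    omega
  · rw [closedForm_of_ne hab, closedForm_of_ne hcd, two_mul_xor_two_mul] at hx
    rcases eq_or_ne (a + c) (b + d) with hdiag | hne
    · rw [hdiag, closedForm_self] at hx
      omega
    · rw [closedForm_of_ne (by omega)] at hx
      exact halfNimber_xor_ne hab hcd hne (by omega)

lemma two_mul_add_one_mem_splitOptions (hpq : p < q) (ht : t < halfNimber p q) :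
    2 * t + 1 ∈ splitOptions closedForm p q := by
  have hp := halfNimber_le_left p q
  obtain ⟨p, rfl⟩ := Nat.exists_eq_add_of_le' (show 1 ≤ p by omega)
  obtain ⟨k, rfl⟩ := Nat.exists_eq_add_of_lt hpq
  obtain ⟨i, hi, rfl⟩ : ∃ i ≤ p, halfNimber i (i + (k + 1)) = t := by
    apply exists_le_eq_of_forall_succ_le_add_one (u := fun i => halfNimber i (i + (k + 1)))
    · intro i
      simpa only [Nat.add_right_comm i 1 (k + 1)] using halfNimber_succ_succ_le i (i + (k + 1))
    · simp only [halfNimber_zero_left, Nat.zero_le]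
    · have := halfNimber_succ_succ_le p (p + (k + 1))
      rw [show p + (k + 1) + 1 = p + 1 + k + 1 by omega] at this
      omega
  refine ⟨p - i, p - i, i, i + (k + 1), by omega, by omega, ?_⟩
  rw [closedForm_self, closedForm_of_ne (by omega), one_xor_two_mul]

lemma two_mul_xor_mem_splitOptions (hab : a ≠ b) (hcd : c ≠ d) :
    2 * (halfNimber a b ^^^ halfNimber c d) ∈ splitOptions closedForm (a + c + 1) (b + d + 1) :=
  ⟨a, b, c, d, rfl, rfl, by
    rw [closedForm_of_ne hab, closedForm_of_ne hcd, two_mul_xor_two_mul]⟩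

lemma two_mul_mem_splitOptions_of_le (hpq : p < q) (ht : t ≤ halfNimber p q) :
    2 * t ∈ splitOptions closedForm (p + 2) (q + 1) := by
  obtain ⟨i, hi, rfl⟩ : ∃ i ≤ p, halfNimber i q = t :=
    exists_le_eq_of_forall_succ_le_add_one (fun i => halfNimber_succ_left_le i q)
      (by simp only [halfNimber_zero_left, Nat.zero_le]) ht
  have hmem := two_mul_xor_mem_splitOptions (a := p + 1 - i) (b := 0) (c := i) (d := q)
    (by omega) (by omega)
  rwa [halfNimber_zero_right, Nat.zero_xor, show p + 1 - i + i + 1 = p + 2 by omega,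
    Nat.zero_add] at hmem

lemma two_mul_halfNimber_mem_splitOptions (hpq : p ≠ q) :
    2 * halfNimber p q ∈ splitOptions closedForm (p + 1) (q + 2) := by
  have hmem := two_mul_xor_mem_splitOptions zero_ne_one hpq
  rwa [halfNimber_zero_left, Nat.zero_xor, Nat.zero_add, show 1 + q + 1 = q + 2 by omega] at hmem

lemma two_mul_two_mul_add_one_mem_splitOptions (hpq : p ≠ q) (hs : p + q = 5 * j + 1)
    (hp : 2 * j ≤ p) (hq : 2 * j ≤ q) :
    2 * (2 * j + 1) ∈ splitOptions closedForm (p + 2) (q + 3) := by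
  have hmem := two_mul_xor_mem_splitOptions (show 1 ≠ 2 by decide) hpq
  rwa [halfNimber_one_two, halfNimber_eq_two_mul hs hp hq, one_xor_two_mul,
    show 1 + p + 1 = p + 2 by omega, show 2 + q + 1 = q + 3 by omega] at hmem

lemma two_mul_mem_splitOptions (hpq : p < q) (ht0 : t ≠ 0) (ht : t < halfNimber p q) :
    2 * t ∈ splitOptions closedForm p q := by
  have hp := halfNimber_le_left p q
  have hs := five_mul_halfNimber_add_two_le hpq.ne (by omega)
  obtain ⟨p, rfl⟩ := Nat.exists_eq_add_of_le' (show 2 ≤ p by omega)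
  obtain ⟨q, rfl⟩ := Nat.exists_eq_add_of_le' (show 2 ≤ q by omega)
  by_cases hcol : t ≤ halfNimber p (q + 1)
  · exact two_mul_mem_splitOptions_of_le (by omega) hcol
  have hlarge : ¬ (t ≤ p ∧ 5 * t + 2 ≤ 2 * (p + (q + 1))) := fun ⟨htp, hts⟩ =>
    hcol (le_halfNimber htp (by omega) hts)
  by_cases hshort : p < t ∧ 5 * t ≤ 2 * (p + q)
  · have htop : halfNimber (p + 1) q = t :=
      le_antisymm ((halfNimber_le_left _ _).trans hshort.1)
        (le_halfNimber (by omega) (by omega) (by omega))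
    exact htop ▸ two_mul_halfNimber_mem_splitOptions (by omega)
  -- As `n` drops by three, `⌊2 n / 5⌋` drops by two only if `5 ∣ n`; here `n = p + q + 3`.
  obtain ⟨j, rfl, hsum⟩ : ∃ j, t = 2 * j + 1 ∧ p + q = 5 * j + 2 :=
    ⟨t / 2, by omega, by omega⟩
  obtain ⟨q, rfl⟩ := Nat.exists_eq_add_of_le' (show 1 ≤ q by omega)
  by_cases hnext : p = q
  · obtain ⟨p, rfl⟩ := Nat.exists_eq_add_of_le' (show 1 ≤ p by omega)
    exact mem_splitOptions_swap closedForm_comm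
      (two_mul_two_mul_add_one_mem_splitOptions (by omega) (by omega) (by omega) (by omega))
  · exact two_mul_two_mul_add_one_mem_splitOptions hnext (by omega) (by omega) (by omega)

lemma mem_splitOptions_of_lt_closedForm (hpq : p ≠ q) (ht0 : t ≠ 0) (ht : t < closedForm p q) :
    t ∈ splitOptions closedForm p q := by
  wlog hlt : p < q generalizing p q
  · exact mem_splitOptions_swap closedForm_comm
      (this hpq.symm (closedForm_comm p q ▸ ht) (hpq.symm.lt_of_le (not_lt.mp hlt)))
  rw [closedForm_of_ne hpq] at ht
  rcases Nat.even_or_odd' t with ⟨s, rfl | rfl⟩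
  · exact two_mul_mem_splitOptions hlt (by omega) (by omega)
  · exact two_mul_add_one_mem_splitOptions hlt (by omega)

lemma h_xor_h_eq_zero_of_pos_closedForm (hpos : 0 < closedForm p q) : h p ^^^ h q = 0 := by
  rcases p with _ | p <;> rcases q with _ | q
  · rfl
  · simp [closedForm, halfNimber_zero_left] at hpos
  · simp [closedForm, halfNimber_zero_right] at hpos
  · exact Nat.xor_self 1

lemma closedForm_eq_mex (p q : ℕ) :
    closedForm p q = mex (insert (h p ^^^ h q) (splitOptions closedForm p q)) := by
  refine (mex_eq_of_notMem_of_forall_lt_mem ?_ fun t ht => ?_).symm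
  · rw [Set.mem_insert_iff, not_or]
    exact ⟨closedForm_ne_h_xor_h p q, closedForm_notMem_splitOptions p q⟩
  · rcases eq_or_ne t 0 with rfl | ht0
    · exact Or.inl (h_xor_h_eq_zero_of_pos_closedForm ht).symm
    · have hpq : p ≠ q := by
        rintro rfl
        rw [closedForm_self] at ht
        omega
      exact Or.inr (mem_splitOptions_of_lt_closedForm hpq ht0 ht)

end ClosedForm

theorem f_eq_closedForm (p q : ℕ) : f p q = closedForm p q := by
  induction p using Nat.strong_induction_on generalizing q with
  | _ p ih => rw [f_eq_mex, closedForm_eq_mex, splitOptions_congr ih]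

section Bound

variable {p q : ℕ}

lemma F_eq_two_mul (hpq : p ≠ q) : F p q = 2 * (2 * (p + q - 1) / 5) := by
  obtain ⟨k, i, hi, hs⟩ : ∃ k i, i < 5 ∧ p + q = 5 * k + i :=
    ⟨_, _, Nat.mod_lt _ (by decide), (Nat.div_add_mod _ 5).symm⟩
  have hs0 : p + q ≠ 0 := by omega
  rw [hs] at hs0
  rw [F, idx, hs]
  interval_cases i <;> split_ifs <;> omega

lemma min_F_le_f (hpq : p ≠ q) : min (F p q) (2 * min p q) ≤ f p q := by
  have := min_le_halfNimber p q
  rw [f_eq_closedForm, closedForm_of_ne hpq, F_eq_two_mul hpq]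
  omega

lemma F_le_two_mul_left (hpq : p < q) (hq : (q : ℤ) < 2 * (p : ℤ) - |(p : ℤ) - 2| / 2) :
    F p q ≤ 2 * p := by
  rw [F_eq_two_mul hpq.ne]
  have := le_abs_self ((p : ℤ) - 2)
  omega

end Bound

theorem stmt9_general {p q l : ℕ} (hpq : p ≠ q) (hl0 : l ≠ 0) (hlF : l < F p q)
    (hlp : l < 2 * p) (hlq : l < 2 * q) :
    ∃ p' ≤ p - 1, ∃ q' ≤ q - 1, f p' q' ^^^ f (p - 1 - p') (q - 1 - q') = l := by
  have hlf : l < f p q := lt_of_lt_of_le (by omega) (min_F_le_f hpq)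
  have hh : h p ^^^ h q = 0 :=
    h_xor_h_eq_zero_of_pos_closedForm (f_eq_closedForm p q ▸ Nat.zero_lt_of_lt hlf)
  rw [f_eq_mex, hh] at hlf
  obtain ⟨p', hp', q', hq', hl⟩ :=
    mem_splitOptions_iff.mp ((mem_of_lt_mex hlf).resolve_left hl0)
  exact ⟨p', by omega, q', by omega, hl⟩

theorem stmt9 (p q : ℕ) (hpq : p < q)
    (hq : (q : ℤ) < 2 * (p : ℤ) - |(p : ℤ) - 2| / 2)
    (l : ℕ) (hl : Even l) (hl1 : 2 ≤ l) (hl2 : l ≤ F p q - 2) :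
    ∃ p' ≤ p - 1, ∃ q' ≤ q - 1,
      f p' q' ^^^ f (p - 1 - p') (q - 1 - q') = l := by
  have hF := F_le_two_mul_left hpq hq
  exact stmt9_general hpq.ne (by omega) (by omega) (by omega) (by omega)
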